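/- The PR box is not quantum: the (2,2,2) probability table P^PR, defined by P^PR(a,b|x,y) = 1/2 if a·b = (−1)^{x·y} and P^PR(a,b|x,y) = 0 otherwise, is not a quantum probability table. -/

import Mathlib

open Kronecker
open scoped ComplexOrder

/-- The outcome value: `true` denotes `+1`, `false` denotes `-1`. -/
noncomputable def sgn (a : Bool) : ℝ := if a then 1 else -1

/-- A probability table is quantum if it arises from local POVM measurements on a
bipartite quantum state. -/
def IsQuantum (P : Bool → Bool → Bool → Bool → ℝ) : Prop :=
  ∃ (dA dB : ℕ), 1 ≤ dA ∧ 1 ≤ dB ∧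
    ∃ (ρ : Matrix (Fin dA × Fin dB) (Fin dA × Fin dB) ℂ)
      (E : Bool → Bool → Matrix (Fin dA) (Fin dA) ℂ)
      (F : Bool → Bool → Matrix (Fin dB) (Fin dB) ℂ),
      ρ.PosSemidef ∧ ρ.trace = 1 ∧
      (∀ x a, (E x a).PosSemidef) ∧ (∀ x, E x false + E x true = 1) ∧
      (∀ y b, (F y b).PosSemidef) ∧ (∀ y, F y false + F y true = 1) ∧
      (∀ a b x y, (P a b x y : ℂ) = (ρ * (E x a ⊗ₖ F y b)).trace)

/-- The PR box: `P(a,b|x,y) = 1/2` if `a·b = (−1)^{x·y}` and `0` otherwise. -/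
noncomputable def PRbox (a b x y : Bool) : ℝ :=
  if sgn a * sgn b = (if x && y then (-1 : ℝ) else 1) then 1 / 2 else 0

open scoped MatrixOrder in
theorem psd_mul_eq_zero {n : Type} [Fintype n] [DecidableEq n] {A B : Matrix n n ℂ}
    (hA : A.PosSemidef) (hB : B.PosSemidef) (h : (A * B).trace = 0) : A * B = 0 := by
  obtain ⟨C, rfl⟩ := CStarAlgebra.nonneg_iff_eq_star_mul_self.mp hA.nonneg
  obtain ⟨D, rfl⟩ := CStarAlgebra.nonneg_iff_eq_star_mul_self.mp hB.nonneg
  simp only [Matrix.star_eq_conjTranspose] at h ⊢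
  have h1 : C * D.conjTranspose = 0 := by
    rw [← Matrix.trace_mul_conjTranspose_self_eq_zero_iff, ← h]
    rw [Matrix.conjTranspose_mul, Matrix.conjTranspose_conjTranspose]
    rw [Matrix.mul_assoc C.conjTranspose, Matrix.trace_mul_comm C.conjTranspose]
    simp only [Matrix.mul_assoc]
  calc _ = C.conjTranspose * (C * D.conjTranspose) * D := by simp only [Matrix.mul_assoc]
    _ = 0 := by rw [h1]; simp

/-- the PR box is not a quantum probability table. -/
theorem prbox_not_quantum : ¬ IsQuantum PRbox := by
  rintro ⟨dA, dB, -, -, ρ, E, F, hρ, htr, hE, hE1, hF, hF1, hP⟩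
  have key : ∀ a b x y, PRbox a b x y = 0 → ρ * (E x a ⊗ₖ F y b) = 0 := by
    intro a b x y h
    apply psd_mul_eq_zero hρ ((hE x a).kronecker (hF y b))
    rw [← hP, h]; simp
  -- marginal identities for perfectly correlated inputs
  have e : ∀ x y, (x && y) = false →
      ρ * (E x true ⊗ₖ (1 : Matrix (Fin dB) (Fin dB) ℂ))
        = ρ * ((1 : Matrix (Fin dA) (Fin dA) ℂ) ⊗ₖ F y true) := by
    intro x y h
    have h1 := key true false x y (by norm_num [PRbox, sgn, h])
    have h2 := key false true x y (by norm_num [PRbox, sgn, h])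
    rw [← hE1 x, ← hF1 y, Matrix.kronecker_add, Matrix.add_kronecker, Matrix.mul_add,
      Matrix.mul_add, h1, h2]
  have h1 := key true true true true (by norm_num [PRbox, sgn])
  have h2 := key false false true true (by norm_num [PRbox, sgn])
  have e10 := e true false rfl
  have e00 := e false false rfl
  have e01 := e false true rfl
  have e11 := e10.trans (e00.symm.trans e01)
  have hEf : E true false = 1 - E true true := eq_sub_of_add_eq (hE1 true)
  have hFf : F true false = 1 - F true true := eq_sub_of_add_eq (hF1 true)
  have hEF : E true true ⊗ₖ F true true = (E true true ⊗ₖ (1 : Matrix (Fin dB) (Fin dB) ℂ))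
      * ((1 : Matrix (Fin dA) (Fin dA) ℂ) ⊗ₖ F true true) := by
    rw [← Matrix.mul_kronecker_mul]; simp
  have hEF2 : E true false ⊗ₖ F true false = 1 - (E true true ⊗ₖ (1 : Matrix (Fin dB) (Fin dB) ℂ))
      - ((1 : Matrix (Fin dA) (Fin dA) ℂ) ⊗ₖ F true true) + E true true ⊗ₖ F true true := by
    rw [hEf, hFf, ← Matrix.one_kronecker_one]
    ext i j
    simp only [Matrix.kroneckerMap_apply, Matrix.sub_apply, Matrix.add_apply]
    ring
  rw [hEF2, Matrix.mul_add, h1, Matrix.mul_sub, Matrix.mul_sub, e11, Matrix.mul_one] at h2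
  rw [hEF, ← Matrix.mul_assoc, e11] at h1
  generalize (1 : Matrix (Fin dA) (Fin dA) ℂ) ⊗ₖ F true true = G at h1 h2
  have h3 : ρ = (2 : ℂ) • (ρ * G) := by
    rw [two_smul]
    rw [add_zero, sub_sub, sub_eq_zero] at h2
    exact h2
  have h4 : ρ * G = 0 := by
    have := congrArg (· * G) h3
    simpa [h1] using this
  rw [h4, smul_zero] at h3
  rw [h3] at htr
  simp at htr
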